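/- Let g, g' : ℝ² → [0,∞) be continuous, compactly supported, and not identically zero, and fix θ ∈ ℝ. Then the ratio N_{g,g'}(θ − τ̄) / N_{g,g'}(θ) tends to 1 as τ̄ → 0⁺. -/

import Mathlib

open MeasureTheory Set ENNReal

noncomputable section

abbrev Plane := EuclideanSpace ℝ (Fin 2)

/-- The 2d heat kernel `p(t,x) = (2πt)⁻¹ exp(−|x|²/(2t))`. -/
def heatK (t : ℝ) (x : Plane) : ℝ :=
  (2 * Real.pi * t)⁻¹ * Real.exp (-‖x‖ ^ 2 / (2 * t))

/-- `j^{θ̄}(t) = e^{θ̄ t} ∫₀^∞ u^{t−1}/Γ(u) du`. -/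
def jfn (θ : ℝ) (t : ℝ) : ℝ :=
  Real.exp (θ * t) * ∫ u in Ioi (0 : ℝ), u ^ (t - 1) / Real.Gamma u

/-- The kernel `W^{θ̄}(t,(x₁,x₂),(x₁',x₂'))`, defined as a fourfold iterated integral with
values in `[0,∞]`. Here `u'' = t − u − u'`. -/
def Wker (θ t : ℝ) (x₁ x₂ x₁' x₂' : Plane) : ℝ≥0∞ :=
  ∫⁻ u in Ioo (0 : ℝ) t, ∫⁻ u' in Ioo (0 : ℝ) (t - u), ∫⁻ y : Plane, ∫⁻ y' : Plane,
    ENNReal.ofReal (heatK u (x₁ - y) * heatK u (x₂ - y) *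
      (4 * Real.pi * jfn θ u' * heatK (u' / 2) (y - y')) *
      (heatK (t - u - u') (y' - x₁') * heatK (t - u - u') (y' - x₂')))

/-- The pairing `N_{g,g'}(θ̄) = ∫ g(x₁)g(x₂) W^{θ̄}(1,(x₁,x₂),(x₁',x₂')) g'(x₁')g'(x₂') dx`. -/
def Npair (g g' : Plane → ℝ) (θ : ℝ) : ℝ≥0∞ :=
  ∫⁻ x₁ : Plane, ∫⁻ x₂ : Plane, ∫⁻ x₁' : Plane, ∫⁻ x₂' : Plane,
    ENNReal.ofReal (g x₁ * g x₂) * Wker θ 1 x₁ x₂ x₁' x₂' *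
      ENNReal.ofReal (g' x₁' * g' x₂')


lemma aux_Gamma_contOn : ContinuousOn Real.Gamma (Ioi 0) := by
  intro x hx
  refine (Real.differentiableAt_Gamma fun m h => ?_).continuousAt.continuousWithinAt
  have : (0:ℝ) < x := hx
  have : (0:ℝ) ≤ m := Nat.cast_nonneg m
  linarith

lemma aux_meas (t : ℝ) : AEStronglyMeasurable (fun u : ℝ => u ^ (t - 1) / Real.Gamma u)
    (volume.restrict (Ioi 0)) := by
  refine ContinuousOn.aestronglyMeasurable ?_ measurableSet_Ioi
  refine ContinuousOn.div ?_ aux_Gamma_contOn fun x hx => (Real.Gamma_pos_of_pos hx).ne'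
  exact fun x hx => (Real.continuousAt_rpow_const x _ (Or.inl (ne_of_gt hx))).continuousWithinAt

lemma aux_upper : ∃ B : ℝ → ℝ, IntegrableOn B (Ioi 0) ∧
    ∀ t ∈ Ioo (0:ℝ) 1, ∀ u ∈ Ioi (0:ℝ), u ^ (t - 1) / Real.Gamma u ≤ B u := by
  obtain ⟨c, hc, hcle⟩ : ∃ c : ℝ, 0 < c ∧ ∀ u ∈ Icc (1:ℝ) 5, c ≤ Real.Gamma u := by
    obtain ⟨x, hx, hmin⟩ := (isCompact_Icc (a := (1:ℝ)) (b := 5)).exists_isMinOn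
      ⟨1, by norm_num⟩ (aux_Gamma_contOn.mono fun x hx => lt_of_lt_of_le one_pos hx.1)
    exact ⟨Real.Gamma x, Real.Gamma_pos_of_pos (by linarith [hx.1]), fun u hu => hmin hu⟩
  refine ⟨fun u => if u ≤ 4 then 4 / c else 8 * u ^ (-2:ℝ), ?_, ?_⟩
  · rw [← Ioc_union_Ioi_eq_Ioi (show (0:ℝ) ≤ 4 by norm_num), integrableOn_union]
    constructor
    · refine IntegrableOn.congr_fun (f := fun _ => 4 / c) ?_ ?_ measurableSet_Ioc
      · exact integrableOn_const (by simp)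
      · intro u hu; simp [hu.2]
    · refine IntegrableOn.congr_fun (f := fun u => 8 * u ^ (-2:ℝ)) ?_ ?_ measurableSet_Ioi
      · exact (integrableOn_Ioi_rpow_of_lt (by norm_num) (by norm_num)).const_mul 8
      · intro u hu; simp [not_le.2 (show (4:ℝ) < u from hu)]
  · intro t ht u hu
    have hu0 : (0:ℝ) < u := hu
    have hG := Real.Gamma_pos_of_pos hu0
    simp only
    split_ifs with h
    · have h1 : Real.Gamma (u + 1) = u * Real.Gamma u := Real.Gamma_add_one hu0.ne'
      have h2 := hcle (u + 1) ⟨by linarith, by linarith⟩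
      have h3 : u ^ (t - 1) * u = u ^ t := by
        rw [← Real.rpow_add_one hu0.ne']; congr 1; ring
      have h4 : u ^ t ≤ 4 := by
        calc u ^ t ≤ 4 ^ t := Real.rpow_le_rpow hu0.le h ht.1.le
          _ ≤ 4 ^ (1:ℝ) := Real.rpow_le_rpow_of_exponent_le (by norm_num) ht.2.le
          _ = 4 := by norm_num
      have h5 : u ^ (t - 1) / Real.Gamma u = u ^ t / Real.Gamma (u + 1) := by
        rw [h1, ← h3]; field_simp
      rw [h5]
      gcongr
    · push Not at h
      have h1 : Real.Gamma u = (u - 1) * ((u - 2) * Real.Gamma (u - 2)) := by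
        rw [← Real.Gamma_add_one (show u - 2 ≠ 0 by linarith),
          show u - 2 + 1 = u - 1 by ring, ← Real.Gamma_add_one (show u - 1 ≠ 0 by linarith)]
        congr 1; ring
      have h2 : 1 ≤ Real.Gamma (u - 2) := by
        rw [← Real.Gamma_two]
        exact Real.Gamma_strictMonoOn_Ici.monotoneOn (by simp) (by simp; linarith) (by linarith)
      have h3 : u ^ 2 / 8 ≤ Real.Gamma u := by
        rw [h1]
        have : (u - 2) * 1 ≤ (u - 2) * Real.Gamma (u - 2) := by
          apply mul_le_mul_of_nonneg_left h2; linarith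
        have : (u - 1) * ((u - 2) * 1) ≤ (u - 1) * ((u - 2) * Real.Gamma (u - 2)) := by
          apply mul_le_mul_of_nonneg_left this; linarith
        nlinarith
      have h4 : u ^ (t - 1) ≤ 1 :=
        Real.rpow_le_one_of_one_le_of_nonpos (by linarith) (by linarith [ht.2])
      have h5 : u ^ (-2:ℝ) = (u ^ 2)⁻¹ := by
        rw [Real.rpow_neg hu0.le]; norm_num
      rw [h5]
      calc u ^ (t - 1) / Real.Gamma u ≤ 1 / (u ^ 2 / 8) := by gcongr
        _ = _ := by field_simp

lemma aux_jint : ∃ c C : ℝ, 0 < c ∧ ∀ t ∈ Ioo (0:ℝ) 1,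
    c ≤ (∫ u in Ioi (0 : ℝ), u ^ (t - 1) / Real.Gamma u) ∧
    (∫ u in Ioi (0 : ℝ), u ^ (t - 1) / Real.Gamma u) ≤ C := by
  obtain ⟨B, hB, hle⟩ := aux_upper
  obtain ⟨c, hc, hcle⟩ : ∃ c : ℝ, 0 < c ∧ ∀ u ∈ Icc (1/2:ℝ) 1, Real.Gamma u ≤ c := by
    obtain ⟨x, hx, hmax⟩ := (isCompact_Icc (a := (1/2:ℝ)) (b := 1)).exists_isMaxOn
      ⟨1, by norm_num⟩ (aux_Gamma_contOn.mono fun x hx => lt_of_lt_of_le (by norm_num) hx.1)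
    exact ⟨Real.Gamma x, Real.Gamma_pos_of_pos (by linarith [hx.1]), fun u hu => hmax hu⟩
  refine ⟨1 / c / 2, ∫ u in Ioi (0:ℝ), B u, by positivity, fun t ht => ?_⟩
  have hnn : ∀ u ∈ Ioi (0:ℝ), 0 ≤ u ^ (t - 1) / Real.Gamma u := fun u hu =>
    div_nonneg (Real.rpow_nonneg (le_of_lt hu) _) (Real.Gamma_pos_of_pos hu).le
  have hint : IntegrableOn (fun u : ℝ => u ^ (t - 1) / Real.Gamma u) (Ioi 0) := by
    refine Integrable.mono' hB (aux_meas t) ?_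
    refine ae_restrict_of_forall_mem measurableSet_Ioi fun u hu => ?_
    rw [Real.norm_of_nonneg (hnn u hu)]
    exact hle t ht u hu
  constructor
  · have hsub : Ioc (1/2:ℝ) 1 ⊆ Ioi 0 := fun x hx => lt_trans (by norm_num) hx.1
    calc 1 / c / 2 = ∫ u in Ioc (1/2:ℝ) 1, 1 / c := by
          simp; norm_num; ring
      _ ≤ ∫ u in Ioc (1/2:ℝ) 1, u ^ (t - 1) / Real.Gamma u := by
          refine setIntegral_mono_on (integrableOn_const (by simp)) (hint.mono_set hsub)
            measurableSet_Ioc fun u hu => ?_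
          have hu0 : 0 < u := hsub hu
          have := Real.Gamma_pos_of_pos hu0
          have h1 : 1 ≤ u ^ (t - 1) :=
            Real.one_le_rpow_of_pos_of_le_one_of_nonpos hu0 hu.2 (by linarith [ht.2])
          have h2 := hcle u ⟨hu.1.le, hu.2⟩
          gcongr
      _ ≤ _ := setIntegral_mono_set hint
          (ae_restrict_of_forall_mem measurableSet_Ioi hnn) hsub.eventuallyLE
  · exact setIntegral_mono_on hint hB measurableSet_Ioi (hle t ht)

lemma aux_jfn (θ : ℝ) : ∃ c C : ℝ, 0 < c ∧ ∀ t ∈ Ioo (0:ℝ) 1, c ≤ jfn θ t ∧ jfn θ t ≤ C := by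
  obtain ⟨c, C, hc, h⟩ := aux_jint
  refine ⟨Real.exp (-|θ|) * c, Real.exp |θ| * C, by positivity, fun t ht => ?_⟩
  obtain ⟨h1, h2⟩ := h t ht
  have ha : |θ * t| ≤ |θ| := by
    rw [abs_mul, abs_of_pos ht.1]
    exact mul_le_of_le_one_right (abs_nonneg _) ht.2.le
  obtain ⟨ha1, ha2⟩ := abs_le.1 ha
  unfold jfn
  constructor
  · gcongr
  · have : 0 ≤ ∫ u in Ioi (0 : ℝ), u ^ (t - 1) / Real.Gamma u := by linarith
    gcongr

lemma heatK_pos {t : ℝ} (ht : 0 < t) (x : Plane) : 0 < heatK t x := by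
  unfold heatK; positivity

lemma heatK_nonpos {t : ℝ} (ht : t ≤ 0) (x : Plane) : heatK t x ≤ 0 := by
  unfold heatK
  refine mul_nonpos_of_nonpos_of_nonneg ?_ (Real.exp_pos _).le
  rw [inv_nonpos]
  exact mul_nonpos_of_nonneg_of_nonpos (by positivity) ht

lemma heatK_lower {t R : ℝ} (ht : 1/8 ≤ t) (ht1 : t ≤ 1) {x : Plane} (hx : ‖x‖ ≤ R) :
    (2 * Real.pi)⁻¹ * Real.exp (-(4 * R ^ 2)) ≤ heatK t x := by
  unfold heatK
  have ht0 : 0 < t := by linarith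
  have := Real.pi_pos
  have h2 : -(4 * R ^ 2) ≤ -‖x‖ ^ 2 / (2 * t) := by
    rw [neg_div, neg_le_neg_iff, div_le_iff₀ (by positivity)]
    have : ‖x‖ ^ 2 ≤ R ^ 2 := by gcongr
    nlinarith [sq_nonneg R]
  have h3 : (2 * Real.pi)⁻¹ ≤ (2 * Real.pi * t)⁻¹ :=
    inv_anti₀ (by positivity) (mul_le_of_le_one_right (by positivity) ht1)
  gcongr

lemma heatK_meas : Measurable (fun p : ℝ × Plane => ENNReal.ofReal (heatK p.1 p.2)) := by
  unfold heatK
  fun_prop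

lemma heatK_lintegral (t : ℝ) : ∫⁻ x : Plane, ENNReal.ofReal (heatK t x) ≤ 1 := by
  rcases le_or_gt t 0 with ht | ht
  · simp [ENNReal.ofReal_of_nonpos (heatK_nonpos ht _)]
  · have h := GaussianFourier.integral_rexp_neg_mul_sq_norm (V := Plane)
      (b := 1 / (2 * t)) (by positivity)
    have h1 : ∫ x : Plane, heatK t x = 1 := by
      unfold heatK
      rw [integral_const_mul]
      have : (fun x : Plane => Real.exp (-‖x‖ ^ 2 / (2 * t))) =
        fun x : Plane => Real.exp (-(1 / (2 * t)) * ‖x‖ ^ 2) := by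
        funext x; congr 1; ring
      rw [this, h]
      have := Real.pi_pos
      simp
      field_simp
    have h2 : Integrable (heatK t) := by
      by_contra hn
      rw [integral_undef hn] at h1
      norm_num at h1
    rw [← ofReal_integral_eq_lintegral_ofReal h2 (ae_of_all _ fun x => (heatK_pos ht x).le), h1]
    simp

lemma heatK_symm (t : ℝ) (x y : Plane) : heatK t (x - y) = heatK t (y - x) := by
  unfold heatK; rw [norm_sub_rev]

lemma heatK_lintegral1 (t : ℝ) (y : Plane) :
    ∫⁻ x : Plane, ENNReal.ofReal (heatK t (x - y)) ≤ 1 := by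
  rw [lintegral_sub_right_eq_self (fun x => ENNReal.ofReal (heatK t x)) y]
  exact heatK_lintegral t

lemma heatK_lintegral2 (t : ℝ) (y : Plane) :
    ∫⁻ x : Plane, ENNReal.ofReal (heatK t (y - x)) ≤ 1 := by
  simp_rw [heatK_symm t y]
  exact heatK_lintegral1 t y

/-- The heat-kernel part of the integrand, with extended nonnegative values. -/
def Kaux (x₁ x₂ x₁' x₂' : Plane) (u u' : ℝ) (y y' : Plane) : ℝ≥0∞ :=
  ENNReal.ofReal (heatK u (x₁ - y)) * ENNReal.ofReal (heatK u (x₂ - y)) *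
    ENNReal.ofReal (heatK (u' / 2) (y - y')) *
    (ENNReal.ofReal (heatK (1 - u - u') (y' - x₁')) *
      ENNReal.ofReal (heatK (1 - u - u') (y' - x₂')))

lemma Wker_le {θ C : ℝ} (hC : ∀ t ∈ Ioo (0:ℝ) 1, 0 ≤ jfn θ t ∧ jfn θ t ≤ C)
    (x₁ x₂ x₁' x₂' : Plane) :
    Wker θ 1 x₁ x₂ x₁' x₂' ≤ ENNReal.ofReal (4 * Real.pi * C) *
      ∫⁻ u in Ioo (0:ℝ) 1, ∫⁻ u' in Ioo (0:ℝ) 1, ∫⁻ y : Plane, ∫⁻ y' : Plane,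
        Kaux x₁ x₂ x₁' x₂' u u' y y' := by
  unfold Wker
  simp_rw [← lintegral_const_mul' _ _ ENNReal.ofReal_ne_top]
  refine setLIntegral_mono' measurableSet_Ioo fun u hu => ?_
  refine le_trans ?_ (lintegral_mono_set (Ioo_subset_Ioo_right (by linarith [hu.1] : 1 - u ≤ 1)))
  refine setLIntegral_mono' measurableSet_Ioo fun u' hu' => ?_
  refine lintegral_mono fun y => lintegral_mono fun y' => ?_
  have hu'' : 0 < 1 - u - u' := by linarith [hu'.2]
  obtain ⟨hj0, hj⟩ := hC u' ⟨hu'.1, by linarith [hu'.2, hu.1]⟩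
  have := Real.pi_pos
  have p1 := heatK_pos hu.1 (x₁ - y)
  have p2 := heatK_pos hu.1 (x₂ - y)
  have p3 := heatK_pos (half_pos hu'.1) (y - y')
  have p4 := heatK_pos hu'' (y' - x₁')
  have p5 := heatK_pos hu'' (y' - x₂')
  unfold Kaux
  rw [← ENNReal.ofReal_mul p1.le, ← ENNReal.ofReal_mul (by positivity),
    ← ENNReal.ofReal_mul p4.le, ← ENNReal.ofReal_mul (by positivity),
    ← ENNReal.ofReal_mul (by nlinarith)]
  apply ENNReal.ofReal_le_ofReal
  calc _ ≤ heatK u (x₁ - y) * heatK u (x₂ - y) *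
      (4 * Real.pi * C * heatK (u' / 2) (y - y')) *
      (heatK (1 - u - u') (y' - x₁') * heatK (1 - u - u') (y' - x₂')) := by gcongr
    _ = _ := by ring

lemma lint3 {α : Type*} [MeasurableSpace α] (μ : Measure α) [SFinite μ]
    (H : α × α × α → ℝ≥0∞) (hH : Measurable H) :
    ∫⁻ a, ∫⁻ b, ∫⁻ c, H (a, b, c) ∂μ ∂μ ∂μ = ∫⁻ p, H p ∂(μ.prod (μ.prod μ)) := by
  rw [lintegral_prod _ hH.aemeasurable]
  refine lintegral_congr fun a => ?_
  rw [lintegral_prod _ (by fun_prop)]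

lemma lint4 {α β : Type*} [MeasurableSpace α] [MeasurableSpace β] (μ : Measure α) [SFinite μ]
    (ν : Measure β) [SFinite ν] (H : β × β × α × α → ℝ≥0∞) (hH : Measurable H) :
    ∫⁻ a, ∫⁻ b, ∫⁻ c, ∫⁻ d, H (a, b, c, d) ∂μ ∂μ ∂ν ∂ν
      = ∫⁻ p, H p ∂(ν.prod (ν.prod (μ.prod μ))) := by
  rw [lintegral_prod _ hH.aemeasurable]
  refine lintegral_congr fun a => ?_
  rw [lintegral_prod _ (by fun_prop)]
  refine lintegral_congr fun b => ?_
  rw [lintegral_prod _ (by fun_prop)]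

lemma swap34 {α β : Type*} [MeasurableSpace α] [MeasurableSpace β] (μ : Measure α) [SFinite μ]
    (ν : Measure β) [SFinite ν] (F : α → α → α → β → β → α → α → ℝ≥0∞)
    (hF : Measurable fun p : (α × α × α) × (β × β × α × α) =>
      F p.1.1 p.1.2.1 p.1.2.2 p.2.1 p.2.2.1 p.2.2.2.1 p.2.2.2.2) :
    ∫⁻ a, ∫⁻ b, ∫⁻ c, ∫⁻ u, ∫⁻ v, ∫⁻ y, ∫⁻ z, F a b c u v y z ∂μ ∂μ ∂ν ∂ν ∂μ ∂μ ∂μ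
    = ∫⁻ u, ∫⁻ v, ∫⁻ y, ∫⁻ z, ∫⁻ a, ∫⁻ b, ∫⁻ c, F a b c u v y z ∂μ ∂μ ∂μ ∂μ ∂μ ∂ν ∂ν := by
  have e1 : ∀ a b c, ∫⁻ u, ∫⁻ v, ∫⁻ y, ∫⁻ z, F a b c u v y z ∂μ ∂μ ∂ν ∂ν =
      ∫⁻ q, F a b c q.1 q.2.1 q.2.2.1 q.2.2.2 ∂(ν.prod (ν.prod (μ.prod μ))) := fun a b c =>
    lint4 μ ν (fun q => F a b c q.1 q.2.1 q.2.2.1 q.2.2.2)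
      (hF.comp (measurable_prodMk_left (x := (a, b, c))))
  have e2 : ∀ u v y z, ∫⁻ a, ∫⁻ b, ∫⁻ c, F a b c u v y z ∂μ ∂μ ∂μ =
      ∫⁻ p, F p.1 p.2.1 p.2.2 u v y z ∂(μ.prod (μ.prod μ)) := fun u v y z =>
    lint3 μ (fun p => F p.1 p.2.1 p.2.2 u v y z)
      (hF.comp (measurable_prodMk_right (y := (u, v, y, z))))
  simp_rw [e1, e2]
  rw [lint3 μ (fun p => ∫⁻ q, F p.1 p.2.1 p.2.2 q.1 q.2.1 q.2.2.1 q.2.2.2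
      ∂(ν.prod (ν.prod (μ.prod μ)))) hF.lintegral_prod_right',
    lint4 μ ν (fun q => ∫⁻ p, F p.1 p.2.1 p.2.2 q.1 q.2.1 q.2.2.1 q.2.2.2
      ∂(μ.prod (μ.prod μ))) hF.lintegral_prod_left']
  exact lintegral_lintegral_swap (f := fun (p : α × α × α) (q : β × β × α × α) => F p.1 p.2.1 p.2.2 q.1 q.2.1 q.2.2.1 q.2.2.2)
    hF.aemeasurable

lemma Kaux_meas (x₁ : Plane) : Measurable fun p : (Plane × Plane × Plane) ×
      (ℝ × ℝ × Plane × Plane) =>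
    Kaux x₁ p.1.1 p.1.2.1 p.1.2.2 p.2.1 p.2.2.1 p.2.2.2.1 p.2.2.2.2 := by
  have hk := heatK_meas
  unfold Kaux
  have h1 := hk.comp (f := fun p : (Plane × Plane × Plane) × (ℝ × ℝ × Plane × Plane) =>
      (p.2.1, x₁ - p.2.2.2.1)) (by fun_prop)
  have h2 := hk.comp (f := fun p : (Plane × Plane × Plane) × (ℝ × ℝ × Plane × Plane) =>
      (p.2.1, p.1.1 - p.2.2.2.1)) (by fun_prop)
  have h3 := hk.comp (f := fun p : (Plane × Plane × Plane) × (ℝ × ℝ × Plane × Plane) =>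
      (p.2.2.1 / 2, p.2.2.2.1 - p.2.2.2.2)) (by fun_prop)
  have h4 := hk.comp (f := fun p : (Plane × Plane × Plane) × (ℝ × ℝ × Plane × Plane) =>
      (1 - p.2.1 - p.2.2.1, p.2.2.2.2 - p.1.2.1)) (by fun_prop)
  have h5 := hk.comp (f := fun p : (Plane × Plane × Plane) × (ℝ × ℝ × Plane × Plane) =>
      (1 - p.2.1 - p.2.2.1, p.2.2.2.2 - p.1.2.2)) (by fun_prop)
  exact ((h1.mul h2).mul h3).mul (h4.mul h5)

lemma K_int (x₁ : Plane) :
    ∫⁻ x₂ : Plane, ∫⁻ x₁' : Plane, ∫⁻ x₂' : Plane,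
      ∫⁻ u in Ioo (0:ℝ) 1, ∫⁻ u' in Ioo (0:ℝ) 1, ∫⁻ y : Plane, ∫⁻ y' : Plane,
        Kaux x₁ x₂ x₁' x₂' u u' y y' ≤ 1 := by
  rw [swap34 (volume : Measure Plane) (volume.restrict (Ioo (0:ℝ) 1))
    (Kaux x₁) (Kaux_meas x₁)]
  have hnt : ∀ t (x : Plane), ENNReal.ofReal (heatK t x) ≠ ∞ := fun _ _ => ENNReal.ofReal_ne_top
  have h1 : ∀ u u' y y', ∫⁻ x₂, ∫⁻ x₁', ∫⁻ x₂', Kaux x₁ x₂ x₁' x₂' u u' y y' ≤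
      ENNReal.ofReal (heatK u (x₁ - y)) * ENNReal.ofReal (heatK (u' / 2) (y - y')) := by
    intro u u' y y'
    have a1 := heatK_lintegral1 u y
    have a2 := heatK_lintegral2 (1 - u - u') y'
    calc ∫⁻ x₂, ∫⁻ x₁', ∫⁻ x₂', Kaux x₁ x₂ x₁' x₂' u u' y y'
        = ∫⁻ x₂, ∫⁻ x₁', ENNReal.ofReal (heatK u (x₁ - y)) *
          ENNReal.ofReal (heatK u (x₂ - y)) * ENNReal.ofReal (heatK (u' / 2) (y - y')) *
          (ENNReal.ofReal (heatK (1 - u - u') (y' - x₁')) *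
            ∫⁻ x₂', ENNReal.ofReal (heatK (1 - u - u') (y' - x₂'))) := by
          refine lintegral_congr fun x₂ => lintegral_congr fun x₁' => ?_
          unfold Kaux
          rw [lintegral_const_mul' _ _ (by finiteness), lintegral_const_mul' _ _ (by finiteness)]
      _ ≤ ∫⁻ x₂, ∫⁻ x₁', ENNReal.ofReal (heatK u (x₁ - y)) *
          ENNReal.ofReal (heatK u (x₂ - y)) * ENNReal.ofReal (heatK (u' / 2) (y - y')) *
          (ENNReal.ofReal (heatK (1 - u - u') (y' - x₁')) * 1) := by gcongr
      _ ≤ ∫⁻ x₂, ENNReal.ofReal (heatK u (x₁ - y)) *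
          ENNReal.ofReal (heatK u (x₂ - y)) * ENNReal.ofReal (heatK (u' / 2) (y - y')) * 1 := by
          refine lintegral_mono fun x₂ => ?_
          simp only [mul_one]
          rw [lintegral_const_mul' _ _ (by finiteness)]
          exact mul_le_of_le_one_right' a2
      _ = ∫⁻ x₂, ENNReal.ofReal (heatK u (x₁ - y)) * ENNReal.ofReal (heatK (u' / 2) (y - y')) *
          ENNReal.ofReal (heatK u (x₂ - y)) := by
          refine lintegral_congr fun x₂ => ?_
          ring
      _ ≤ _ := by
          rw [lintegral_const_mul' _ _ (by finiteness)]
          exact mul_le_of_le_one_right' a1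
  calc _ ≤ ∫⁻ u in Ioo (0:ℝ) 1, ∫⁻ u' in Ioo (0:ℝ) 1, ∫⁻ y : Plane, ∫⁻ y' : Plane,
        ENNReal.ofReal (heatK u (x₁ - y)) * ENNReal.ofReal (heatK (u' / 2) (y - y')) := by
        refine lintegral_mono fun u => lintegral_mono fun u' => lintegral_mono fun y =>
          lintegral_mono fun y' => h1 u u' y y'
    _ ≤ ∫⁻ u in Ioo (0:ℝ) 1, ∫⁻ u' in Ioo (0:ℝ) 1, 1 := by
        refine lintegral_mono fun u => lintegral_mono fun u' => ?_
        refine le_trans (lintegral_mono fun y => ?_) (heatK_lintegral2 u x₁)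
        rw [lintegral_const_mul' _ _ (by finiteness)]
        exact mul_le_of_le_one_right' (heatK_lintegral2 _ _)
    _ = 1 := by simp

lemma Npair_lt_top (g g' : Plane → ℝ)
    (hgc : Continuous g) (hg'c : Continuous g')
    (hgs : HasCompactSupport g) (hg's : HasCompactSupport g')
    (hg0 : ∀ x, 0 ≤ g x) (hg'0 : ∀ x, 0 ≤ g' x) (θ : ℝ) : Npair g g' θ ≠ ∞ := by
  obtain ⟨c, C, hc, hC⟩ := aux_jfn θ
  obtain ⟨M, hM⟩ := hgs.exists_bound_of_continuous hgc
  obtain ⟨M', hM'⟩ := hg's.exists_bound_of_continuous hg'c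
  have hM1 : ∀ x, g x ≤ M := fun x => (le_abs_self _).trans (hM x)
  have hM2 : ∀ x, g' x ≤ M' := fun x => (le_abs_self _).trans (hM' x)
  have hM0 : 0 ≤ M := (hg0 0).trans (hM1 0)
  have hM0' : 0 ≤ M' := (hg'0 0).trans (hM2 0)
  have hW := Wker_le (θ := θ) (C := C) fun t ht => ⟨hc.le.trans (hC t ht).1, (hC t ht).2⟩
  have key : Npair g g' θ ≤ ∫⁻ x₁, ENNReal.ofReal (M * M' * M' * (4 * Real.pi * C))
      * ENNReal.ofReal (g x₁) := by
    unfold Npair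
    refine lintegral_mono fun x₁ => ?_
    have h0 : ∀ x₂ x₁' x₂', ENNReal.ofReal (g x₁ * g x₂) * Wker θ 1 x₁ x₂ x₁' x₂' *
        ENNReal.ofReal (g' x₁' * g' x₂') ≤
        (ENNReal.ofReal (M * M' * M' * (4 * Real.pi * C)) * ENNReal.ofReal (g x₁)) *
        ∫⁻ u in Ioo (0:ℝ) 1, ∫⁻ u' in Ioo (0:ℝ) 1, ∫⁻ y : Plane, ∫⁻ y' : Plane,
        Kaux x₁ x₂ x₁' x₂' u u' y y' := by
      intro x₂ x₁' x₂'
      calc _ ≤ (ENNReal.ofReal (g x₁) * ENNReal.ofReal M) *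
            (ENNReal.ofReal (4 * Real.pi * C) *
              ∫⁻ u in Ioo (0:ℝ) 1, ∫⁻ u' in Ioo (0:ℝ) 1, ∫⁻ y : Plane, ∫⁻ y' : Plane,
              Kaux x₁ x₂ x₁' x₂' u u' y y') * (ENNReal.ofReal M' * ENNReal.ofReal M') := by
            rw [ENNReal.ofReal_mul (hg0 x₁), ENNReal.ofReal_mul (hg'0 x₁')]
            gcongr
            · exact hM1 _
            · exact hW _ _ _ _
            · exact hM2 _
            · exact hM2 _
        _ = _ := by
            rw [ENNReal.ofReal_mul (p := M * M' * M') (by positivity),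
              ENNReal.ofReal_mul (p := M * M') (by positivity),
              ENNReal.ofReal_mul (p := M) (by positivity)]
            ring
    refine (lintegral_mono fun x₂ => lintegral_mono fun x₁' => lintegral_mono fun x₂' =>
      h0 x₂ x₁' x₂').trans ?_
    have hf : ENNReal.ofReal (M * M' * M' * (4 * Real.pi * C)) * ENNReal.ofReal (g x₁) ≠ ∞ := by
      finiteness
    simp_rw [lintegral_const_mul' _ _ hf]
    exact mul_le_of_le_one_right' (K_int x₁)
  refine ne_top_of_le_ne_top ?_ key
  rw [lintegral_const_mul' _ _ ENNReal.ofReal_ne_top]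
  refine ENNReal.mul_ne_top ENNReal.ofReal_ne_top ?_
  exact (hgc.integrable_of_hasCompactSupport hgs).lintegral_lt_top.ne

lemma Npair_ne_zero (g g' : Plane → ℝ)
    (hgc : Continuous g) (hg'c : Continuous g')
    (hg0 : ∀ x, 0 ≤ g x) (hg'0 : ∀ x, 0 ≤ g' x)
    (hgne : g ≠ 0) (hg'ne : g' ≠ 0) (θ : ℝ) : Npair g g' θ ≠ 0 := by
  obtain ⟨c, C, hc, hC⟩ := aux_jfn θ
  have hS : ∀ f : Plane → ℝ, Continuous f → (∀ x, 0 ≤ f x) → f ≠ 0 →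
      ∃ (S : Set Plane) (m R : ℝ), MeasurableSet S ∧ volume S ≠ 0 ∧ 0 < m ∧ 0 ≤ R ∧
        ∀ x ∈ S, m ≤ f x ∧ ‖x‖ ≤ R := by
    intro f hfc hf0 hfne
    obtain ⟨x0, hx0⟩ := Function.ne_iff.1 hfne
    have hpos : 0 < f x0 := lt_of_le_of_ne (hf0 x0) (Ne.symm hx0)
    have hopen : IsOpen ({x | f x0 / 2 < f x} ∩ Metric.ball x0 1) :=
      (isOpen_lt continuous_const hfc).inter Metric.isOpen_ball
    refine ⟨{x | f x0 / 2 < f x} ∩ Metric.ball x0 1, f x0 / 2, ‖x0‖ + 1, hopen.measurableSet,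
      (hopen.measure_pos volume ⟨x0, by simpa using hpos, by simp⟩).ne', by positivity,
      by positivity, fun x hx => ⟨hx.1.le, ?_⟩⟩
    have h1 : ‖x - x0‖ < 1 := by simpa [dist_eq_norm] using hx.2
    have h2 : x = x0 + (x - x0) := by abel
    calc ‖x‖ = ‖x0 + (x - x0)‖ := by rw [← h2]
      _ ≤ ‖x0‖ + ‖x - x0‖ := norm_add_le _ _
      _ ≤ _ := by linarith
  obtain ⟨S, m, R, hSm, hSv, hm, hR, hSx⟩ := hS g hgc hg0 hgne
  obtain ⟨S', m', R', hSm', hSv', hm', hR', hSx'⟩ := hS g' hg'c hg'0 hg'ne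
  set D : ℝ := (2 * Real.pi)⁻¹ * Real.exp (-(4 * (R + R' + 2) ^ 2)) with hD
  have hπ := Real.pi_pos
  have hDpos : 0 < D := by positivity
  set κ : ℝ := D * D * (4 * Real.pi * c * D) * (D * D) with hκ
  have hκpos : 0 < κ := by positivity
  have hnorm : ∀ x y : Plane, ‖x‖ ≤ R + R' + 1 → ‖y‖ ≤ 1 → ‖x - y‖ ≤ R + R' + 2 := by
    intro x y hx hy
    have := norm_sub_le x y
    linarith
  set w : ℝ≥0∞ := ∫⁻ u in Ioo (1/4 : ℝ) (1/3), ∫⁻ u' in Ioo (1/4:ℝ) (1/3),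
    ∫⁻ y in Metric.ball (0:Plane) 1, ∫⁻ y' in Metric.ball (0:Plane) 1, ENNReal.ofReal κ with hw
  have hball : volume (Metric.ball (0:Plane) 1) ≠ 0 :=
    (Metric.measure_ball_pos volume _ one_pos).ne'
  have hw0 : w ≠ 0 := by
    rw [hw]
    simp only [lintegral_const, Measure.restrict_apply_univ, Real.volume_Ioo]
    refine mul_ne_zero (mul_ne_zero (mul_ne_zero (mul_ne_zero ?_ hball) hball) ?_) ?_
    · simpa using hκpos
    · norm_num
    · norm_num
  have hW : ∀ x₁ ∈ S, ∀ x₂ ∈ S, ∀ x₁' ∈ S', ∀ x₂' ∈ S', w ≤ Wker θ 1 x₁ x₂ x₁' x₂' := by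
    intro x₁ h₁ x₂ h₂ x₁' h₁' x₂' h₂'
    unfold Wker
    refine le_trans ?_ (lintegral_mono_set (Ioo_subset_Ioo (by norm_num : (0:ℝ) ≤ 1/4)
      (by norm_num : (1/3:ℝ) ≤ 1)))
    refine setLIntegral_mono' measurableSet_Ioo fun u hu => ?_
    refine le_trans ?_ (lintegral_mono_set (Ioo_subset_Ioo (by norm_num : (0:ℝ) ≤ 1/4)
      (by linarith [hu.2] : (1/3:ℝ) ≤ 1 - u)))
    refine setLIntegral_mono' measurableSet_Ioo fun u' hu' => ?_
    refine le_trans ?_ (setLIntegral_le_lintegral (Metric.ball (0:Plane) 1) _)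
    refine setLIntegral_mono' measurableSet_ball fun y hy => ?_
    refine le_trans ?_ (setLIntegral_le_lintegral (Metric.ball (0:Plane) 1) _)
    refine setLIntegral_mono' measurableSet_ball fun y' hy' => ?_
    have hy1 : ‖y‖ ≤ 1 := by simpa using (mem_ball_zero_iff.1 hy).le
    have hy1' : ‖y'‖ ≤ 1 := by simpa using (mem_ball_zero_iff.1 hy').le
    obtain ⟨hu1, hu2⟩ := hu
    obtain ⟨hu1', hu2'⟩ := hu'
    have q1 : D ≤ heatK u (x₁ - y) := heatK_lower (by linarith) (by linarith)
      (hnorm _ _ (by linarith [(hSx _ h₁).2]) hy1)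
    have q2 : D ≤ heatK u (x₂ - y) := heatK_lower (by linarith) (by linarith)
      (hnorm _ _ (by linarith [(hSx _ h₂).2]) hy1)
    have q3 : D ≤ heatK (u' / 2) (y - y') := heatK_lower (by linarith) (by linarith)
      (hnorm _ _ (by linarith) hy1')
    have q4 : D ≤ heatK (1 - u - u') (y' - x₁') := by
      rw [heatK_symm]
      exact heatK_lower (by linarith) (by linarith)
        (hnorm _ _ (by linarith [(hSx' _ h₁').2]) hy1')
    have q5 : D ≤ heatK (1 - u - u') (y' - x₂') := by
      rw [heatK_symm]
      exact heatK_lower (by linarith) (by linarith)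
        (hnorm _ _ (by linarith [(hSx' _ h₂').2]) hy1')
    have q6 : c ≤ jfn θ u' := (hC u' ⟨by linarith, by linarith⟩).1
    apply ENNReal.ofReal_le_ofReal
    have := hDpos.trans_le q1
    have := hDpos.trans_le q2
    have := hDpos.trans_le q3
    have := hDpos.trans_le q4
    have := hDpos.trans_le q5
    have := hc.trans_le q6
    rw [hκ]
    clear_value D
    gcongr
  have key : ∫⁻ x₁ in S, ∫⁻ x₂ in S, ∫⁻ x₁' in S', ∫⁻ x₂' in S',
      ENNReal.ofReal (m * m) * w * ENNReal.ofReal (m' * m') ≤ Npair g g' θ := by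
    unfold Npair
    refine le_trans ?_ (setLIntegral_le_lintegral S _)
    refine setLIntegral_mono' hSm fun x₁ h₁ => ?_
    refine le_trans ?_ (setLIntegral_le_lintegral S _)
    refine setLIntegral_mono' hSm fun x₂ h₂ => ?_
    refine le_trans ?_ (setLIntegral_le_lintegral S' _)
    refine setLIntegral_mono' hSm' fun x₁' h₁' => ?_
    refine le_trans ?_ (setLIntegral_le_lintegral S' _)
    refine setLIntegral_mono' hSm' fun x₂' h₂' => ?_
    have a1 := hW x₁ h₁ x₂ h₂ x₁' h₁' x₂' h₂'
    have a2 := (hSx _ h₁).1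
    have a3 := (hSx _ h₂).1
    have a4 := (hSx' _ h₁').1
    have a5 := (hSx' _ h₂').1
    have := hg0 x₁
    have := hg'0 x₁'
    clear_value w
    gcongr
  intro h0
  rw [h0] at key
  simp only [lintegral_const, Measure.restrict_apply_univ] at key
  refine absurd (le_antisymm key zero_le) ?_
  have b1 : ENNReal.ofReal (m * m) ≠ 0 := by simpa using mul_pos hm hm
  have b2 : ENNReal.ofReal (m' * m') ≠ 0 := by simpa using mul_pos hm' hm'
  exact mul_ne_zero (mul_ne_zero (mul_ne_zero (mul_ne_zero (mul_ne_zero (mul_ne_zero b1 hw0) b2)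
    hSv') hSv') hSv) hSv

lemma Npair_mono_scale (g g' : Plane → ℝ) {θ₁ θ₂ k : ℝ} (hk : 0 ≤ k)
    (h : ∀ t ∈ Ioo (0:ℝ) 1, jfn θ₁ t ≤ k * jfn θ₂ t) :
    Npair g g' θ₁ ≤ ENNReal.ofReal k * Npair g g' θ₂ := by
  have hW : ∀ x₁ x₂ x₁' x₂', Wker θ₁ 1 x₁ x₂ x₁' x₂' ≤
      ENNReal.ofReal k * Wker θ₂ 1 x₁ x₂ x₁' x₂' := by
    intro x₁ x₂ x₁' x₂'
    unfold Wker
    simp_rw [← lintegral_const_mul' _ _ ENNReal.ofReal_ne_top]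
    refine setLIntegral_mono' measurableSet_Ioo fun u hu => ?_
    refine setLIntegral_mono' measurableSet_Ioo fun u' hu' => ?_
    refine lintegral_mono fun y => lintegral_mono fun y' => ?_
    rw [← ENNReal.ofReal_mul hk]
    apply ENNReal.ofReal_le_ofReal
    have hu'' : 0 < 1 - u - u' := by linarith [hu'.2]
    have hj := h u' ⟨hu'.1, by linarith [hu'.2, hu.1]⟩
    have := Real.pi_pos
    have p1 := heatK_pos hu.1 (x₁ - y)
    have p2 := heatK_pos hu.1 (x₂ - y)
    have p3 := heatK_pos (half_pos hu'.1) (y - y')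
    have p4 := heatK_pos hu'' (y' - x₁')
    have p5 := heatK_pos hu'' (y' - x₂')
    calc _ ≤ heatK u (x₁ - y) * heatK u (x₂ - y) *
        (4 * Real.pi * (k * jfn θ₂ u') * heatK (u' / 2) (y - y')) *
        (heatK (1 - u - u') (y' - x₁') * heatK (1 - u - u') (y' - x₂')) := by gcongr
      _ = _ := by ring
  unfold Npair
  simp_rw [← lintegral_const_mul' _ _ ENNReal.ofReal_ne_top]
  refine lintegral_mono fun x₁ => lintegral_mono fun x₂ => lintegral_mono fun x₁' =>
    lintegral_mono fun x₂' => ?_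
  calc _ ≤ ENNReal.ofReal (g x₁ * g x₂) * (ENNReal.ofReal k * Wker θ₂ 1 x₁ x₂ x₁' x₂') *
      ENNReal.ofReal (g' x₁' * g' x₂') := by
        gcongr
        exact hW _ _ _ _
    _ = _ := by ring

/-- For continuous, compactly supported, nonnegative, not-identically-zero `g, g'` and fixed
`θ ∈ ℝ`, the ratio `N_{g,g'}(θ − τ̄)/N_{g,g'}(θ)` tends to `1` as `τ̄ → 0⁺`. -/
theorem Npair_ratio_tendsto_one (g g' : Plane → ℝ)
    (hgc : Continuous g) (hg'c : Continuous g')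
    (hgs : HasCompactSupport g) (hg's : HasCompactSupport g')
    (hg0 : ∀ x, 0 ≤ g x) (hg'0 : ∀ x, 0 ≤ g' x)
    (hgne : g ≠ 0) (hg'ne : g' ≠ 0) (θ : ℝ) :
    Filter.Tendsto (fun τ : ℝ => (Npair g g' (θ - τ)).toReal / (Npair g g' θ).toReal)
      (nhdsWithin 0 (Ioi 0)) (nhds 1) := by
  have hfin := Npair_lt_top g g' hgc hg'c hgs hg's hg0 hg'0
  have hne := Npair_ne_zero g g' hgc hg'c hg0 hg'0 hgne hg'ne θ
  have hpos : 0 < (Npair g g' θ).toReal := ENNReal.toReal_pos hne (hfin θ)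
  have hI : ∀ t ∈ Ioo (0:ℝ) 1, 0 ≤ ∫ u in Ioi (0 : ℝ), u ^ (t - 1) / Real.Gamma u := by
    obtain ⟨c, C, hc, h⟩ := aux_jint
    exact fun t ht => hc.le.trans (h t ht).1
  have hup : ∀ τ : ℝ, 0 < τ → (Npair g g' (θ - τ)).toReal ≤ (Npair g g' θ).toReal := by
    intro τ hτ
    refine ENNReal.toReal_mono (hfin θ) ?_
    have := Npair_mono_scale g g' (θ₁ := θ - τ) (θ₂ := θ) (k := 1) zero_le_one fun t ht => by
      have := hI t ht
      have h2 : (θ - τ) * t ≤ θ * t := by nlinarith [ht.1]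
      unfold jfn
      rw [one_mul]
      gcongr
    simpa using this
  have hlow : ∀ τ : ℝ, 0 < τ →
      (Npair g g' θ).toReal ≤ Real.exp τ * (Npair g g' (θ - τ)).toReal := by
    intro τ hτ
    have := Npair_mono_scale g g' (θ₁ := θ) (θ₂ := θ - τ) (k := Real.exp τ) (Real.exp_pos _).le
      fun t ht => by
        have := hI t ht
        have h2 : θ * t ≤ τ + (θ - τ) * t := by nlinarith [ht.1, ht.2]
        unfold jfn
        rw [← mul_assoc, ← Real.exp_add]
        gcongr
    have h3 := ENNReal.toReal_mono (ENNReal.mul_ne_top ENNReal.ofReal_ne_top (hfin _)) this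
    rwa [ENNReal.toReal_mul, ENNReal.toReal_ofReal (Real.exp_pos _).le] at h3
  have hexp : Filter.Tendsto (fun τ : ℝ => Real.exp (-τ)) (nhdsWithin 0 (Ioi 0)) (nhds 1) := by
    have : Continuous fun τ : ℝ => Real.exp (-τ) := by fun_prop
    have h := this.tendsto 0
    simp only [neg_zero, Real.exp_zero] at h
    exact h.mono_left nhdsWithin_le_nhds
  refine tendsto_of_tendsto_of_tendsto_of_le_of_le' hexp tendsto_const_nhds ?_ ?_
  · filter_upwards [self_mem_nhdsWithin] with τ hτ
    rw [le_div_iff₀ hpos, Real.exp_neg, inv_mul_le_iff₀ (Real.exp_pos _)]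
    exact hlow τ hτ
  · filter_upwards [self_mem_nhdsWithin] with τ hτ
    rw [div_le_one hpos]
    exact hup τ hτ

end
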